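/- Let J₀ be a skew-symmetric orthogonal matrix on ℝ^{2L} (so J₀ᵀ = -J₀ and J₀² = -1) and let A ∈ O(2L) be an orthogonal matrix with J₁ = A J₀ Aᵀ. Then (-1)^{(1/2)·dim ker(J₀ + J₁)} = sgn(det A). -/

import Mathlib

open Matrix

namespace IndexAux

variable {n : Type} [Fintype n] [DecidableEq n]

lemma det_pos_of_form_pos (M : Matrix n n ℝ) (h : ∀ x : n → ℝ, x ≠ 0 → 0 < x ⬝ᵥ M *ᵥ x) :
    0 < M.det := by
  let f : ℝ → ℝ := fun t => ((1 - t) • (1 : Matrix n n ℝ) + t • M).det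
  have hf : Continuous f := by
    apply Continuous.matrix_det
    fun_prop
  have hne : ∀ t ∈ Set.Icc (0 : ℝ) 1, f t ≠ 0 := by
    intro t ht h0
    obtain ⟨x, hx, hx0⟩ := Matrix.exists_mulVec_eq_zero_iff.mpr h0
    have h1 : (1 - t) * (x ⬝ᵥ x) + t * (x ⬝ᵥ M *ᵥ x) = 0 := by
      have := congrArg (fun y => x ⬝ᵥ y) hx0
      simpa [Matrix.add_mulVec, Matrix.smul_mulVec, dotProduct_add, dotProduct_smul] using this
    have h2 := h x hx
    have h3 : 0 < x ⬝ᵥ x := by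
      have := (Matrix.dotProduct_star_self_pos_iff (v := x)).2 hx
      simpa using this
    rcases ht.1.eq_or_lt with h4 | h4
    · subst h4
      simp at h1
      exact hx h1
    · have := mul_pos h4 h2
      have := mul_nonneg (sub_nonneg.2 ht.2) h3.le
      linarith
  by_contra hneg
  have h1 : f 1 ≤ 0 := by simpa [f] using hneg
  have h0 : 0 ≤ f 0 := by simp [f]
  obtain ⟨t, ht, h⟩ := intermediate_value_Icc' (zero_le_one) hf.continuousOn ⟨h1, h0⟩
  exact hne t ht h

lemma det_nonneg_of_commute (J M : Matrix n n ℝ) (hJ : J * J = -1) (hc : M * J = J * M) :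
    0 ≤ M.det := by
  let c : ℝ →+* ℂ := Complex.ofRealHom
  let J' : Matrix n n ℂ := J.map c
  let M' : Matrix n n ℂ := M.map c
  have hJ' : J' * J' = -1 := by
    have := congrArg (fun X : Matrix n n ℝ => c.mapMatrix X) hJ
    simp only [map_mul, map_neg, map_one] at this
    exact this
  have hc' : M' * J' = J' * M' := by
    have := congrArg (fun X : Matrix n n ℝ => c.mapMatrix X) hc
    simp only [map_mul] at this
    exact this
  let P : Matrix n n ℂ := (1/2 : ℂ) • (1 - Complex.I • J')
  let Q : Matrix n n ℂ := (1/2 : ℂ) • (1 + Complex.I • J')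
  have hXX : (Complex.I • J') * (Complex.I • J') = 1 := by
    rw [smul_mul_smul_comm, hJ', Complex.I_mul_I, neg_smul, one_smul, neg_neg]
  have hPQ : P * Q = 0 := by
    have : (1 - Complex.I • J') * (1 + Complex.I • J') = 0 := by
      rw [sub_mul, mul_add, mul_add, hXX, mul_one, mul_one, one_mul]; abel
    simp only [P, Q]
    rw [smul_mul_smul_comm, this, smul_zero]
  have hQP : Q * P = 0 := by
    have : (1 + Complex.I • J') * (1 - Complex.I • J') = 0 := by
      rw [add_mul, mul_sub, mul_sub, hXX, mul_one, mul_one, one_mul]; abel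
    simp only [P, Q]
    rw [smul_mul_smul_comm, this, smul_zero]
  have hadd : P + Q = 1 := by
    simp only [P, Q, ← smul_add]
    rw [sub_add_add_cancel, ← two_smul ℂ, smul_smul]; norm_num
  have hPP : P * P = P := by
    calc P * P = P * (P + Q) := by rw [mul_add, hPQ, add_zero]
      _ = P := by rw [hadd, mul_one]
  have hQQ : Q * Q = Q := by
    calc Q * Q = Q * (P + Q) := by rw [mul_add, hQP, zero_add]
      _ = Q := by rw [hadd, mul_one]
  have hPM : P * M' = M' * P := by
    simp [P, mul_sub, sub_mul, hc']
  have hfac : (M' * P + Q) * (M' * Q + P) = M' := by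
    have e1 : M' * P * (M' * Q) = 0 := by
      rw [mul_assoc, ← mul_assoc P, hPM, mul_assoc M', hPQ]; simp
    have e2 : M' * P * P = M' * P := by rw [mul_assoc, hPP]
    have hQM : Q * M' = M' * Q := by
      simp [Q, mul_add, add_mul, hc']
    have e3 : Q * (M' * Q) = M' * Q := by rw [← mul_assoc, hQM, mul_assoc, hQQ]
    rw [add_mul, mul_add, mul_add, e1, e2, e3, hQP, zero_add, add_zero, ← mul_add, hadd, mul_one]
  let s : ℂ →+* ℂ := starRingEnd ℂ
  have sM : s.mapMatrix M' = M' := by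
    ext i j; simp [M', s, c]
  have sJ : s.mapMatrix J' = J' := by
    ext i j; simp [J', s, c]
  have sP : s.mapMatrix P = Q := by
    ext i j
    have := congrFun (congrFun sJ i) j
    simp only [RingHom.mapMatrix_apply, Matrix.map_apply] at this
    simp only [P, Q, RingHom.mapMatrix_apply, Matrix.map_apply, Matrix.smul_apply, Matrix.sub_apply,
      Matrix.add_apply, smul_eq_mul, map_mul, map_sub, this, Matrix.one_apply]
    have h2 : (starRingEnd ℂ) 2 = 2 := Complex.conj_ofNat 2
    split_ifs <;> simp [s, h2]
  have sQ : s.mapMatrix Q = P := by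
    rw [← sP]; ext i j; simp [s]
  have hconj : s.mapMatrix (M' * P + Q) = M' * Q + P := by
    rw [map_add, map_mul, sM, sP, sQ]
  have hd : (M.det : ℂ) = (M' * P + Q).det * s (M' * P + Q).det := by
    rw [RingHom.map_det, hconj, ← det_mul, hfac]
    exact RingHom.map_det c M
  have : (M.det : ℂ) = ((Complex.normSq (M' * P + Q).det : ℝ) : ℂ) := by
    rw [hd]; exact Complex.mul_conj _
  rw [Complex.ofReal_inj.1 this]
  exact Complex.normSq_nonneg _

lemma dot_skew (J : Matrix n n ℝ) (hJ : Jᵀ = -J) (x y : n → ℝ) :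
    (J *ᵥ x) ⬝ᵥ y = - (x ⬝ᵥ J *ᵥ y) := by
  rw [dotProduct_mulVec, ← mulVec_transpose, hJ, neg_mulVec, neg_dotProduct, neg_neg]

lemma dot_orth (B : Matrix n n ℝ) (hB : Bᵀ * B = 1) (x y : n → ℝ) :
    (B *ᵥ x) ⬝ᵥ (B *ᵥ y) = x ⬝ᵥ y := by
  rw [dotProduct_mulVec, ← mulVec_transpose, mulVec_mulVec, hB, one_mulVec]

lemma base (J B : Matrix n n ℝ) (hJ : Jᵀ = -J) (hJJ : J * J = -1) (hB : Bᵀ * B = 1)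
    (hN : (B * J + J * B).det ≠ 0) : 0 < B.det := by
  set M := B - J * B * J with hM
  have hMN : M = -(J * (B * J + J * B)) := by
    rw [mul_add, ← mul_assoc, ← mul_assoc, hJJ, hM]; noncomm_ring
  have hJdet : J.det ≠ 0 := by
    intro h0
    have := congrArg det hJJ
    rw [det_mul, h0, zero_mul] at this
    have h2 : (-1 : Matrix n n ℝ).det ≠ 0 := by
      rw [det_neg]; simp
    exact h2 this.symm
  have hMdet : M.det ≠ 0 := by
    rw [hMN, det_neg, det_mul]
    exact mul_ne_zero (by simp) (mul_ne_zero hJdet hN)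
  have hcomm : M * J = J * M := by
    have e1 : M * J = B * J + J * B := by
      rw [hM, sub_mul, mul_assoc (J * B), hJJ]; simp
    have e2 : J * M = J * B + B * J := by
      rw [hM, mul_sub, ← mul_assoc, ← mul_assoc, hJJ]; simp
    rw [e1, e2, add_comm]
  have hMpos : 0 < M.det := lt_of_le_of_ne (det_nonneg_of_commute J M hJJ hcomm) hMdet.symm
  have hpos : 0 < (Mᵀ * B).det := by
    apply det_pos_of_form_pos
    intro x hx
    have h1 : x ⬝ᵥ (Mᵀ * B) *ᵥ x = (M *ᵥ x) ⬝ᵥ (B *ᵥ x) := by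
      rw [← mulVec_mulVec, dotProduct_mulVec, vecMul_transpose]
    have hMx : M *ᵥ x ≠ 0 := fun h0 =>
      hMdet (Matrix.exists_mulVec_eq_zero_iff.mp ⟨x, hx, h0⟩)
    have h3 : 0 < (M *ᵥ x) ⬝ᵥ (M *ᵥ x) := by
      have := (Matrix.dotProduct_star_self_pos_iff (v := M *ᵥ x)).2 hMx
      simpa using this
    have hJo : ∀ y z, (J *ᵥ y) ⬝ᵥ (J *ᵥ z) = y ⬝ᵥ z :=
      dot_orth J (by rw [hJ, neg_mul, hJJ, neg_neg])
    have hMx' : M *ᵥ x = B *ᵥ x - J *ᵥ (B *ᵥ (J *ᵥ x)) := by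
      rw [hM, sub_mulVec, mulVec_mulVec, mulVec_mulVec]
    have e : (M *ᵥ x) ⬝ᵥ (M *ᵥ x) = 2 * ((M *ᵥ x) ⬝ᵥ (B *ᵥ x)) := by
      rw [hMx']
      simp only [sub_dotProduct, dotProduct_sub, hJo, dot_orth B hB]
      rw [dotProduct_comm (B *ᵥ x)]
      ring
    rw [h1]; linarith
  rw [det_mul, det_transpose] at hpos
  exact (pos_iff_pos_of_mul_pos hpos).1 hMpos

lemma det_refl (v : n → ℝ) (hv : v ⬝ᵥ v = 1) :
    (1 - (2 : ℝ) • vecMulVec v v).det = -1 := by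
  have : (1 - (2 : ℝ) • vecMulVec v v) = 1 + replicateCol Unit ((-2 : ℝ) • v) * replicateRow Unit v := by
    ext i j
    simp [vecMulVec_apply, Matrix.mul_apply]
    ring
  rw [this, det_one_add_replicateCol_mul_replicateRow, dotProduct_smul, hv]
  norm_num

lemma main (J : Matrix n n ℝ) (hJ : Jᵀ = -J) (hJJ : J * J = -1) (k : ℕ) :
    ∀ B : Matrix n n ℝ, Bᵀ * B = 1 →
      Module.finrank ℝ (LinearMap.ker (B * J + J * B).mulVecLin) = k →
      (-1 : ℝ) ^ (k / 2) = B.det := by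
  induction k using Nat.strong_induction_on with
  | _ k ih =>
  intro B hB hk
  have hmem : ∀ (B : Matrix n n ℝ) x, x ∈ LinearMap.ker (B * J + J * B).mulVecLin ↔
      B *ᵥ (J *ᵥ x) + J *ᵥ (B *ᵥ x) = 0 := by
    intro B x
    simp [add_mulVec, mulVec_mulVec]
  have hJJv : ∀ x, J *ᵥ (J *ᵥ x) = -x := by
    intro x; rw [mulVec_mulVec, hJJ, neg_mulVec, one_mulVec]
  set K := LinearMap.ker (B * J + J * B).mulVecLin with hK
  by_cases hbot : K = ⊥
  · have hk0 : k = 0 := by rw [← hk, hbot]; simp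
    have hN : (B * J + J * B).det ≠ 0 := by
      intro h0
      obtain ⟨x, hx, hx0⟩ := Matrix.exists_mulVec_eq_zero_iff.mpr h0
      have : x ∈ K := by rw [hK, LinearMap.mem_ker]; exact hx0
      rw [hbot] at this
      exact hx (by simpa using this)
    have hp := base J B hJ hJJ hB hN
    have h2 := congrArg det hB
    rw [det_mul, det_transpose, det_one] at h2
    subst hk0
    simp
    nlinarith
  · obtain ⟨w, hwK, hw0⟩ := Submodule.exists_mem_ne_zero_of_ne_bot hbot
    have hww : 0 < w ⬝ᵥ w := by
      have := (Matrix.dotProduct_star_self_pos_iff (v := w)).2 hw0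
      simpa using this
    obtain ⟨v, hvK, hv⟩ : ∃ v ∈ K, v ⬝ᵥ v = 1 := by
      refine ⟨(Real.sqrt (w ⬝ᵥ w))⁻¹ • w, K.smul_mem _ hwK, ?_⟩
      rw [smul_dotProduct, dotProduct_smul, smul_eq_mul, smul_eq_mul, ← mul_assoc, ← mul_inv,
        Real.mul_self_sqrt hww.le, inv_mul_cancel₀ hww.ne']
    set u := J *ᵥ v with hu
    have hvE := (hmem B v).1 hvK
    have hJBv : J *ᵥ (B *ᵥ v) = - (B *ᵥ u) := by rw [eq_neg_iff_add_eq_zero, add_comm]; exact hvE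
    have hJu : J *ᵥ u = -v := hJJv v
    have hJBu : J *ᵥ (B *ᵥ u) = B *ᵥ v := by
      have := congrArg (fun y => J *ᵥ y) hJBv
      simp only [hJJv, mulVec_neg] at this
      exact (neg_injective this).symm
    have huK : u ∈ K := by
      rw [hmem, hJBu, hJu, mulVec_neg]; simp
    have huu : u ⬝ᵥ u = 1 := by
      rw [hu, dot_skew J hJ, hJJv, dotProduct_neg, neg_neg, hv]
    have huv : u ⬝ᵥ v = 0 := by
      have := dot_skew J hJ v v
      rw [dotProduct_comm v] at this
      linarith
    have hvu : v ⬝ᵥ u = 0 := by rw [dotProduct_comm, huv]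
    set R : Matrix n n ℝ := 1 - (2 : ℝ) • vecMulVec v v with hR
    have hRx : ∀ x, R *ᵥ x = x - (2 * (v ⬝ᵥ x)) • v := by
      intro x
      rw [hR, sub_mulVec, one_mulVec, smul_mulVec, vecMulVec_mulVec, mul_smul]
      simp
    have hRT : Rᵀ = R := by
      rw [hR]; simp [transpose_vecMulVec]
    have hRR : R * R = 1 := by
      have hq : vecMulVec v v * vecMulVec v v = vecMulVec v v := by
        rw [vecMulVec_mul_vecMulVec, hv, one_smul]
      rw [hR, mul_sub, sub_mul, sub_mul, mul_one, mul_one, one_mul, smul_mul_smul_comm, hq]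
      module
    have hB' : (B * R)ᵀ * (B * R) = 1 := by
      rw [transpose_mul, hRT, mul_assoc, ← mul_assoc Bᵀ, hB, one_mul, hRR]
    have hdet : (B * R).det = - B.det := by
      rw [det_mul, hR, det_refl v hv]; ring
    set K' := LinearMap.ker (B * R * J + J * (B * R)).mulVecLin with hK'
    have hN' : ∀ x, (B * R) *ᵥ (J *ᵥ x) + J *ᵥ ((B * R) *ᵥ x) =
        (B *ᵥ (J *ᵥ x) + J *ᵥ (B *ᵥ x)) + (2 * (u ⬝ᵥ x)) • (B *ᵥ v) + (2 * (v ⬝ᵥ x)) • (B *ᵥ u) := by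
      intro x
      rw [← mulVec_mulVec, ← mulVec_mulVec, hRx, hRx, hu, dot_skew J hJ]
      simp only [mulVec_sub, mulVec_smul, hJBv, ← hu]
      module
    have hmem' : ∀ x, x ∈ K' ↔ x ∈ K ∧ v ⬝ᵥ x = 0 ∧ u ⬝ᵥ x = 0 := by
      intro x
      rw [hmem (B * R), hN', hmem B]
      constructor
      · intro h
        have o1 : (B *ᵥ v) ⬝ᵥ (B *ᵥ (J *ᵥ x) + J *ᵥ (B *ᵥ x)) = 0 := by
          have e := dot_skew J hJ (B *ᵥ v) (B *ᵥ x)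
          rw [hJBv, neg_dotProduct, dot_orth B hB] at e
          have e2 := dot_skew J hJ v x
          rw [← hu] at e2
          rw [dotProduct_add, dot_orth B hB]
          linarith
        have o2 : (B *ᵥ u) ⬝ᵥ (B *ᵥ (J *ᵥ x) + J *ᵥ (B *ᵥ x)) = 0 := by
          have e := dot_skew J hJ (B *ᵥ u) (B *ᵥ x)
          rw [hJBu, dot_orth B hB] at e
          have e2 := dot_skew J hJ u x
          rw [hJu, neg_dotProduct] at e2
          rw [dotProduct_add, dot_orth B hB]
          linarith
        have h1 := congrArg (fun y => (B *ᵥ v) ⬝ᵥ y) h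
        have h2 := congrArg (fun y => (B *ᵥ u) ⬝ᵥ y) h
        simp only [dotProduct_add _ (_ + _) _, o1, o2, dotProduct_smul, dot_orth B hB, hv, huu,
          huv, hvu, dotProduct_zero, smul_eq_mul] at h1 h2
        have h1 : u ⬝ᵥ x = 0 := by linarith
        have h2 : v ⬝ᵥ x = 0 := by linarith
        rw [h1, h2] at h
        exact ⟨by simpa using h, h2, h1⟩
      · rintro ⟨h, h1, h2⟩
        rw [h, h1, h2]; simp
    have hle : K' ≤ K := fun x hx => ((hmem' x).1 hx).1
    let φ0 : (n → ℝ) →ₗ[ℝ] ℝ × ℝ :=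
      (dotProductBilin ℝ ℝ v).prod (dotProductBilin ℝ ℝ u)
    have hφ0 : ∀ x, φ0 x = (v ⬝ᵥ x, u ⬝ᵥ x) := fun x => rfl
    let φ : K →ₗ[ℝ] ℝ × ℝ := φ0.comp K.subtype
    have hsurj : LinearMap.range φ = ⊤ := by
      rw [LinearMap.range_eq_top]
      rintro ⟨a, b⟩
      refine ⟨a • ⟨v, hvK⟩ + b • ⟨u, huK⟩, ?_⟩
      rw [map_add, map_smul, map_smul]
      have e1 : φ ⟨v, hvK⟩ = (1, 0) := by
        change φ0 v = _
        rw [hφ0, hv, huv]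
      have e2 : φ ⟨u, huK⟩ = (0, 1) := by
        change φ0 u = _
        rw [hφ0, hvu, huu]
      rw [e1, e2]; simp
    have hker : LinearMap.ker φ = K'.comap K.subtype := by
      ext x
      rw [LinearMap.mem_ker, Submodule.mem_comap, hmem']
      change φ0 x = 0 ↔ _
      rw [hφ0]
      simp
    have hfr := φ.finrank_range_add_finrank_ker
    rw [hsurj, hker, (Submodule.comapSubtypeEquivOfLe hle).finrank_eq, hk] at hfr
    simp at hfr
    have := ih (Module.finrank ℝ K') (by omega) (B * R) hB' rfl
    rw [hdet] at this
    have hk2 : k / 2 = Module.finrank ℝ K' / 2 + 1 := by omega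
    rw [hk2, pow_succ, this]; ring

end IndexAux

/-- Let `J₀` be a skew-symmetric orthogonal matrix on `ℝ^{2L}` (so `J₀ᵀ = -J₀`
and `J₀² = -1`) and let `A ∈ O(2L)` be an orthogonal matrix with `J₁ = A J₀ Aᵀ`.
Then `(-1) ^ ((1/2) * dim ker (J₀ + J₁)) = sgn (det A)`. -/
theorem index_eq_sign_det {L : ℕ} (J₀ A : Matrix (Fin (2 * L)) (Fin (2 * L)) ℝ)
    (hJskew : J₀ᵀ = -J₀) (hJorth : J₀ * J₀ᵀ = 1)
    (hAorth : A * Aᵀ = 1) :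
    (-1 : ℝ) ^ (Module.finrank ℝ (LinearMap.ker (J₀ + A * J₀ * Aᵀ).mulVecLin) / 2)
      = Real.sign A.det := by
  have hJJ : J₀ * J₀ = -1 := by
    rw [hJskew, mul_neg] at hJorth
    rw [← hJorth, neg_neg]
  have hA' : Aᵀ * A = 1 := mul_eq_one_comm.1 hAorth
  have hker : LinearMap.ker (J₀ + A * J₀ * Aᵀ).mulVecLin
      = LinearMap.ker (Aᵀ * J₀ + J₀ * Aᵀ).mulVecLin := by
    have e1 : J₀ + A * J₀ * Aᵀ = A * (Aᵀ * J₀ + J₀ * Aᵀ) := by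
      rw [mul_add, ← mul_assoc, hAorth, one_mul, mul_assoc]
    have e2 : Aᵀ * J₀ + J₀ * Aᵀ = Aᵀ * (J₀ + A * J₀ * Aᵀ) := by
      rw [e1, ← mul_assoc, hA', one_mul]
    ext x
    simp only [LinearMap.mem_ker, mulVecLin_apply]
    constructor
    · intro h
      rw [e2, ← mulVec_mulVec, h, mulVec_zero]
    · intro h
      rw [e1, ← mulVec_mulVec, h, mulVec_zero]
  have hm := IndexAux.main J₀ hJskew hJJ _ Aᵀ (by rw [transpose_transpose]; exact hAorth) rfl
  rw [hker, hm, det_transpose]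
  have h2 := congrArg det hAorth
  rw [det_mul, det_transpose, det_one] at h2
  rcases mul_self_eq_one_iff.1 h2 with h | h <;> rw [h]
  · exact (Real.sign_of_pos one_pos).symm
  · exact (Real.sign_of_neg (by norm_num)).symm
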